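/- Let D be an ADF and let v and w be strongly admissible interpretations of D. Then the join v ⊔_i w is also a strongly admissible interpretation of D. -/

import Mathlib

/-!
A derivation witnessing strong acceptability or deniability with respect to `v` only consults
arguments decided by `v`. Hence it remains a derivation, with the same sets `P`, `S`, `E`, for every
interpretation above `v` in the information order (`SJrel.mono`).

It remains to see that both `v` and `w` lie below their join. For `v` this is immediate. For `w` it
says that `v` and `w` never assign opposite values (`SJrel.compatible`). This goes by induction on
the derivation for `v`: if the arguments in `P` are not contradicted by `w`, then `v|_P` and `w` have
a common two-valued completion, and this completion would have to make `φ_a` both true and false if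
`v a` and `w a` were opposite, since a strongly admissible `w` decides `φ_a` according to `w a`.
-/

/-- Three truth values: true, false, undecided. -/
inductive TV : Type
  | t | f | u
deriving DecidableEq, Repr

/-- The information order on truth values: u <_i t and u <_i f. -/
def TV.ile (x y : TV) : Prop := x = TV.u ∨ x = y

/-- The information order on interpretations, extended pointwise. -/
def ILE {A : Type*} (v w : A → TV) : Prop := ∀ a, TV.ile (v a) (w a)

/-- An abstract dialectical framework on a set of arguments `A`:
each argument `a` has an acceptance condition `C a : (A → Bool) → Bool`. -/
structure ADF (A : Type*) where
  C : A → (A → Bool) → Bool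

/-- The trivial interpretation mapping every argument to undecided. -/
def trivialInterp (A : Type*) : A → TV := fun _ => TV.u

/-- The parents of `a` are the arguments on which its acceptance condition depends. -/
def ADF.parents {A : Type*} [DecidableEq A] (D : ADF A) (a : A) : Set A :=
  {b | ∃ w : A → Bool, D.C a w ≠ D.C a (Function.update w b (!w b))}

/-- A two-valued assignment `w` completes a three-valued interpretation `v`. -/
def Completes {A : Type*} (w : A → Bool) (v : A → TV) : Prop :=
  ∀ b, (v b = TV.t → w b = true) ∧ (v b = TV.f → w b = false)

/-- `φ` is irrefutable under `v`: every completion of `v` makes `φ` true. -/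
def Irrefutable {A : Type*} (φ : (A → Bool) → Bool) (v : A → TV) : Prop :=
  ∀ w : A → Bool, Completes w v → φ w = true

/-- `φ` is unsatisfiable under `v`: every completion of `v` makes `φ` false. -/
def Unsat {A : Type*} (φ : (A → Bool) → Bool) (v : A → TV) : Prop :=
  ∀ w : A → Bool, Completes w v → φ w = false

open Classical in
/-- The characteristic operator Γ_D of an ADF. -/
noncomputable def Gamma {A : Type*} (D : ADF A) (v : A → TV) : A → TV := fun a =>
  if Irrefutable (D.C a) v then TV.t
  else if Unsat (D.C a) v then TV.f
  else TV.u

open Classical in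
/-- `v|_P`: agrees with `v` on `P` and is undecided elsewhere. -/
noncomputable def restrictTV {A : Type*} (v : A → TV) (P : Set A) : A → TV :=
  fun b => if b ∈ P then v b else TV.u

/-- Strong acceptability/deniability of an argument with respect to interpretation `v`
and set `S`, relative to an excluded set `E` (the first index). An argument `a` with
`v a = t` (resp. `v a = f`) is strongly acceptable (resp. strongly deniable) iff there is
`P ⊆ (parents a ∩ S) \ E` with `φ_a^{v|_P}` irrefutable (resp. unsatisfiable) and every
`p ∈ P` strongly acceptable/deniable relative to `E ∪ {p}`. -/
inductive SJrel {A : Type*} [DecidableEq A] (D : ADF A) (v : A → TV) (S : Set A) :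
    Set A → A → Prop
  | acc (E : Set A) (a : A) (P : Set A)
      (ha : v a = TV.t)
      (hP : P ⊆ (D.parents a ∩ S) \ E)
      (hirr : Irrefutable (D.C a) (restrictTV v P))
      (hrec : ∀ p ∈ P, SJrel D v S (E ∪ {p}) p) : SJrel D v S E a
  | den (E : Set A) (a : A) (P : Set A)
      (ha : v a = TV.f)
      (hP : P ⊆ (D.parents a ∩ S) \ E)
      (hunsat : Unsat (D.C a) (restrictTV v P))
      (hrec : ∀ p ∈ P, SJrel D v S (E ∪ {p}) p) : SJrel D v S E a

/-- `a` is strongly acceptable/deniable w.r.t. `v` and `S`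
(i.e., relative to the excluded set `{a}`). -/
def StronglyJustified {A : Type*} [DecidableEq A] (D : ADF A) (v : A → TV)
    (S : Set A) (a : A) : Prop :=
  SJrel D v S {a} a

/-- `S` is a least set for `a` with respect to `v`. -/
def LeastSet {A : Type*} [DecidableEq A] (D : ADF A) (v : A → TV)
    (a : A) (S : Set A) : Prop :=
  StronglyJustified D v S a ∧
  ∀ S' : Set A, S'.ncard < S.ncard → ¬ StronglyJustified D v S' a

/-- An interpretation is strongly admissible iff every argument assigned `t`/`f`
is strongly acceptable/deniable w.r.t. `v` and some set `S`. -/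
def StronglyAdmissible {A : Type*} [DecidableEq A] (D : ADF A) (v : A → TV) : Prop :=
  ∀ a : A, v a ≠ TV.u → ∃ S : Set A, StronglyJustified D v S a

/-- `g` is the grounded interpretation of `D`: the least fixed point of `Γ_D`. -/
def IsGrounded {A : Type*} (D : ADF A) (g : A → TV) : Prop :=
  Gamma D g = g ∧ ∀ w : A → TV, Gamma D w = w → ILE g w

/-- An interpretation is admissible iff `v ≤_i Γ_D(v)`. -/
def Admissible {A : Type*} (D : ADF A) (v : A → TV) : Prop :=
  ILE v (Gamma D v)

/-- An interpretation is conflict-free. -/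
def ConflictFree {A : Type*} (D : ADF A) (v : A → TV) : Prop :=
  ∀ a : A, (v a = TV.t → ∃ w : A → Bool, Completes w v ∧ D.C a w = true) ∧
           (v a = TV.f → Unsat (D.C a) v)

/-- The join of two interpretations: take `v`'s value where defined, else `w`'s. -/
def joinI {A : Type*} (v w : A → TV) : A → TV :=
  fun a => if v a = TV.u then w a else v a

theorem SJrel.ne_u {A : Type*} [DecidableEq A] {D : ADF A} {v : A → TV} {S E : Set A} {a : A}
    (h : SJrel D v S E a) : v a ≠ TV.u := by
  cases h <;> simp_all

theorem restrictTV_eq_of_ile {A : Type*} {v j : A → TV} (hvj : ILE v j) {P : Set A}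
    (hP : ∀ p ∈ P, v p ≠ TV.u) : restrictTV j P = restrictTV v P := by
  funext b
  unfold restrictTV
  split_ifs with hb
  · exact ((hvj b).resolve_left (hP b hb)).symm
  · rfl

theorem SJrel.mono {A : Type*} [DecidableEq A] {D : ADF A} {v j : A → TV} (hvj : ILE v j)
    {S E : Set A} {a : A} (h : SJrel D v S E a) : SJrel D j S E a := by
  induction h with
  | acc E a P ha hP hirr hrec ih =>
    refine .acc E a P ?_ hP ?_ ih
    · rw [← (hvj a).resolve_left (by simp [ha]), ha]
    · rwa [restrictTV_eq_of_ile hvj fun p hp => (hrec p hp).ne_u]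
  | den E a P ha hP hunsat hrec ih =>
    refine .den E a P ?_ hP ?_ ih
    · rw [← (hvj a).resolve_left (by simp [ha]), ha]
    · rwa [restrictTV_eq_of_ile hvj fun p hp => (hrec p hp).ne_u]

theorem Completes.of_restrict {A : Type*} {x : A → Bool} {w : A → TV} (h : Completes x w)
    (P : Set A) : Completes x (restrictTV w P) := by
  intro b
  unfold restrictTV
  split_ifs
  · exact h b
  · simp

/-- A strongly admissible `w` is admissible, stated through completions: the acceptance condition of a
decided argument takes the value of that argument under every two-valued completion of `w`. -/
theorem StronglyAdmissible.forced {A : Type*} [DecidableEq A] {D : ADF A} {w : A → TV}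
    (hw : StronglyAdmissible D w) {x : A → Bool} (hx : Completes x w) (a : A) :
    (w a = TV.t → D.C a x = true) ∧ (w a = TV.f → D.C a x = false) := by
  by_cases hu : w a = TV.u
  · simp [hu]
  · obtain ⟨S, hS⟩ := hw a hu
    cases hS with
    | acc _ _ P ha hP hirr hrec => simp [ha, hirr x (hx.of_restrict P)]
    | den _ _ P ha hP hunsat hrec => simp [ha, hunsat x (hx.of_restrict P)]

theorem exists_common_completion {A : Type*} {v w : A → TV} {P : Set A}
    (h : ∀ p ∈ P, TV.ile (w p) (v p)) :
    ∃ x : A → Bool, Completes x (restrictTV v P) ∧ Completes x w := by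
  classical
  refine ⟨fun b => decide (restrictTV v P b = TV.t ∨ w b = TV.t), fun b => ?_, fun b => ?_⟩ <;>
  · by_cases hb : b ∈ P
    · rcases h b hb with h | h <;> simp +contextual [restrictTV, hb, h]
    · simp +contextual [restrictTV, hb]

/-- A strongly admissible `w` does not contradict any value justified with respect to `v`. -/
theorem SJrel.compatible {A : Type*} [DecidableEq A] {D : ADF A} {v w : A → TV}
    (hw : StronglyAdmissible D w) {S E : Set A} {a : A} (h : SJrel D v S E a) :
    TV.ile (w a) (v a) := by
  induction h with
  | acc E a P ha hP hirr hrec ih =>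
    obtain ⟨x, hxv, hxw⟩ := exists_common_completion ih
    have h1 := hirr x hxv
    have h2 := hw.forced hxw a
    rcases hwa : w a <;> simp_all [TV.ile]
  | den E a P ha hP hunsat hrec ih =>
    obtain ⟨x, hxv, hxw⟩ := exists_common_completion ih
    have h1 := hunsat x hxv
    have h2 := hw.forced hxw a
    rcases hwa : w a <;> simp_all [TV.ile]

/-- The join of two strongly admissible interpretations is
strongly admissible. -/
theorem join_strongly_admissible {A : Type*} [Fintype A] [DecidableEq A]
    (D : ADF A) (v w : A → TV)
    (hv : StronglyAdmissible D v) (hw : StronglyAdmissible D w) :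
    StronglyAdmissible D (joinI v w) := by
  have hvj : ILE v (joinI v w) := by
    intro a
    by_cases hu : v a = TV.u <;> simp [TV.ile, joinI, hu]
  have hwj : ILE w (joinI v w) := by
    intro a
    by_cases hu : v a = TV.u
    · simp [TV.ile, joinI, hu]
    · obtain ⟨S, hS⟩ := hv a hu
      simpa [joinI, hu] using SJrel.compatible hw hS
  intro a ha
  by_cases hu : v a = TV.u
  · obtain ⟨S, hS⟩ := hw a (by simpa [joinI, hu] using ha)
    exact ⟨S, SJrel.mono hwj hS⟩
  · obtain ⟨S, hS⟩ := hv a hu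
    exact ⟨S, SJrel.mono hvj hS⟩
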